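/- arXiv:1203.0334 — 2 statements merged into one kernel-verified Lean document; each statement's English description precedes it below -/
import Mathlib

section
/- Let x, y, e be words such that x·e ∈ Lin, e·y ∈ Lin, and x·e·y is square-free relative to π. Then x·e·y ∈ Lin. -/
/-!
Since `D̄_σ` is closed under both `=_σ` and `=_ρ`, and any two words of `D_σ` are `=_σ`-equal, each of
`D̄_σ`, `D̄_ρ` is a single class of `=_π`. So `~` is just `=_π` restricted to `D_τ`, and among three
words of `D_τ` two are `=_π`-equal. These are the only facts about the system that are needed
(`ReplacementSystem`).

Take decompositions `x₁, …, xₙ` of `x·e` and `y₁, …, yₘ` of `e·y`, with `d_i = p_i x_i q_i`. The basic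
tool is that the part of a decomposition to the left of its member `i` is `=_π`-equal to a word ending
in `p_i`, and the part to the right to a word beginning with `q_i` (`prefix_equiv`,
`suffix_equiv`); so every `d_i` occurs in some word of the class.

If `e` is a suffix of `xₙ`, the members of the second decomposition that lie inside `e` can be deleted
(`glue_of_suffix`): if `e = y₁ ⋯ y_{l-1} y'` and `y_l = y' y''` with `y'' ≠ 1`, then
`x₁, …, xₙ, y'', y_{l+1}, …` is a decomposition, with `p_l y'` as the left complement of `y''`.
Otherwise `e = e' xₙ` with `e' ≠ 1`. If `q_{n-1} = 1`, then `x·e' ∈ Lin` and `e` gets shorter. If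
`q_{n-1} ≠ 1`, then `d_n = xₙ` and `d_{n-1} ≠_π d_n`, and each possible coincidence between the
classes of `d_n` and of the member `y_l` at the end of `e` produces either a square in a word
`=_π`-equal to `x·e·y` or the missing link that glues the decompositions.
-/

namespace SqFreePaper

variable {A : Type*}

/-- A word is square-free if it contains no nonempty factor of the form `s ++ s`. -/
def IsSquareFreeWord (w : List A) : Prop :=
  ∀ u s v : List A, w = u ++ s ++ s ++ v → s = []

/-- One-step rewriting relation associated with a system of defining relations `π`. -/
def OneStep (π : List A → List A → Prop) (x y : List A) : Prop :=
  ∃ r s u v : List A, x = r ++ u ++ s ∧ y = r ++ v ++ s ∧ (π u v ∨ π v u)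

/-- The congruence `=_π` generated by `π`: reflexive-transitive closure of one-step rewriting. -/
def EqRel (π : List A → List A → Prop) : List A → List A → Prop :=
  Relation.ReflTransGen (OneStep π)

/-- `w` is square-free relative to `π`: every word in its `=_π`-class is square-free. -/
def SFRel (π : List A → List A → Prop) (w : List A) : Prop :=
  ∀ z, EqRel π w z → IsSquareFreeWord z

/-- Union of two systems of defining relations. -/
def PiRel (σ ρ : List A → List A → Prop) (x y : List A) : Prop := σ x y ∨ ρ x y

/-- The set of defining words of a system `σ`. -/
def DWords (σ : List A → List A → Prop) : Set (List A) :=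
  {x | ∃ y, σ x y ∨ σ y x}

/-- The closure of `D_σ` under the congruence `=_ρ`. -/
def ClosureD (σ ρ : List A → List A → Prop) : Set (List A) :=
  {x | ∃ w ∈ DWords σ, EqRel ρ w x}

/-- The system `{(u_i, u_j) : i < j}` determined by a finite family of words. -/
def FamilyRel {n : ℕ} (u : Fin n → List A) (x y : List A) : Prop :=
  ∃ i j : Fin n, i < j ∧ x = u i ∧ y = u j

/-- `x ~ y` iff both lie in `D̄_σ` or both lie in `D̄_ρ`. -/
def Sim (σ ρ : List A → List A → Prop) (x y : List A) : Prop :=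
  (x ∈ ClosureD σ ρ ∧ y ∈ ClosureD σ ρ) ∨ (x ∈ ClosureD ρ σ ∧ y ∈ ClosureD ρ σ)

/-- `D_τ = D̄_σ ∪ D̄_ρ`. -/
def DTau (σ ρ : List A → List A → Prop) : Set (List A) :=
  ClosureD σ ρ ∪ ClosureD ρ σ

/-- The concatenation `x_a ++ x_{a+1} ++ ⋯ ++ x_{a+len-1}`. -/
def wordSeg (x : ℕ → List A) (a len : ℕ) : List A :=
  ((List.range' a len).map x).flatten

/-- Standing hypotheses of the paper: `D̄_σ`, `D̄_ρ` are finite, nonempty, disjoint,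
and closed under `=_σ`, `=_ρ` respectively. -/
def SettingHyps (σ ρ : List A → List A → Prop) : Prop :=
  (ClosureD σ ρ).Finite ∧ (ClosureD ρ σ).Finite ∧
  (ClosureD σ ρ).Nonempty ∧ (ClosureD ρ σ).Nonempty ∧
  (ClosureD σ ρ ∩ ClosureD ρ σ = ∅) ∧
  (∀ x ∈ ClosureD σ ρ, ∀ y, EqRel σ x y → y ∈ ClosureD σ ρ) ∧
  (∀ x ∈ ClosureD ρ σ, ∀ y, EqRel ρ x y → y ∈ ClosureD ρ σ)

/-- `x_1, …, x_n` (with complementary members `p_i`, `q_i`) is a linear decomposition. -/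
def IsLinDecomp (σ ρ : List A → List A → Prop) (n : ℕ) (x p q : ℕ → List A) : Prop :=
  1 ≤ n ∧
  (∀ i, 1 ≤ i → i ≤ n → x i ≠ []) ∧
  (∃ u v : ℕ → List A,
    (∀ i, 1 < i → i ≤ n → Sim σ ρ (p i ++ x i ++ q i) (q (i-1) ++ u i)) ∧
    (∀ i, 1 ≤ i → i < n → Sim σ ρ (p i ++ x i ++ q i) (v i ++ p (i+1)))) ∧
  (∀ i, 1 ≤ i → i < n → q i = [] ∨ p (i+1) = []) ∧
  p 1 = [] ∧ q n = [] ∧ (n = 1 → x 1 ∈ DTau σ ρ)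

/-- `Lin(n)`: words with a linear decomposition of at most `n` members. -/
def LinSet (σ ρ : List A → List A → Prop) (n : ℕ) : Set (List A) :=
  {w | ∃ m, 1 ≤ m ∧ m ≤ n ∧ ∃ x p q, IsLinDecomp σ ρ m x p q ∧ w = wordSeg x 1 m}

/-- `Lin = ⋃ₙ Lin(n)`: linearly decomposable words. -/
def LinAll (σ ρ : List A → List A → Prop) : Set (List A) :=
  {w | ∃ n, w ∈ LinSet σ ρ n}

/-- Occurrence `(r, d, s)` contains occurrence `(p, e, q)` (of the same word)
iff `|r| ≤ |p|` and `|s| ≤ |q|`. -/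
def Contained (p q r s : List A) : Prop := r.length ≤ p.length ∧ s.length ≤ q.length

/-- Two occurrences in `w` overlap iff some occurrence of a nonempty word is
contained in both. -/
def Overlap (w p q r s : List A) : Prop :=
  ∃ a f b : List A, f ≠ [] ∧ w = a ++ f ++ b ∧ Contained a b p q ∧ Contained a b r s

/-- `(p, e, q)` is a maximal occurrence in `w` of a word `e` in the set `L`. -/
def MaximalOcc (L : Set (List A)) (w p e q : List A) : Prop :=
  w = p ++ e ++ q ∧ e ∈ L ∧
  ∀ r d s, w = r ++ d ++ s → d ∈ L → Contained p q r s → r = p ∧ d = e ∧ s = q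

/-! ### Equivalences with two classes of replaceable words -/

/-- What the argument uses of `=_π` (here `E`) and `D_τ` (here `D`): `E` is a congruence, `D` is a union
of `E`-classes, and `D` consists of at most two classes. -/
structure ReplacementSystem (E : List A → List A → Prop) (D : Set (List A)) : Prop where
  refl : ∀ a, E a a
  symm : ∀ {a b}, E a b → E b a
  trans : ∀ {a b c}, E a b → E b c → E a c
  ctx : ∀ {a b} (l r), E a b → E (l ++ a ++ r) (l ++ b ++ r)
  closed : ∀ {a b}, a ∈ D → E a b → b ∈ D
  two_classes : ∀ {a b c}, a ∈ D → b ∈ D → c ∈ D → ¬ E a b → ¬ E b c → E a c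

lemma EqRel.symm' {π : List A → List A → Prop} {a b : List A} (h : EqRel π a b) : EqRel π b a := by
  induction h with
  | refl => exact Relation.ReflTransGen.refl
  | tail _ hs ih =>
    obtain ⟨r, s, u, v, rfl, rfl, h⟩ := hs
    exact Relation.ReflTransGen.head ⟨r, s, v, u, rfl, rfl, h.symm⟩ ih

lemma EqRel.ctx {π : List A → List A → Prop} {a b : List A} (l r : List A) (h : EqRel π a b) :
    EqRel π (l ++ a ++ r) (l ++ b ++ r) := by
  induction h with
  | refl => exact Relation.ReflTransGen.refl
  | tail _ hs ih =>
    obtain ⟨r', s, u, v, rfl, rfl, h⟩ := hs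
    exact ih.tail ⟨l ++ r', s ++ r, u, v, by simp, by simp, h⟩

lemma EqRel.mono {π π' : List A → List A → Prop} (hπ : ∀ a b, π a b → π' a b) {a b : List A}
    (h : EqRel π a b) : EqRel π' a b := by
  induction h with
  | refl => exact Relation.ReflTransGen.refl
  | tail _ hs ih =>
    obtain ⟨r, s, u, v, rfl, rfl, h⟩ := hs
    exact ih.tail ⟨r, s, u, v, rfl, rfl, h.imp (hπ _ _) (hπ _ _)⟩

lemma closureD_closed {σ ρ : List A → List A → Prop}
    (hσ : ∀ x ∈ ClosureD σ ρ, ∀ y, EqRel σ x y → y ∈ ClosureD σ ρ)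
    {x y : List A} (hx : x ∈ ClosureD σ ρ) (h : EqRel (PiRel σ ρ) x y) : y ∈ ClosureD σ ρ := by
  induction h with
  | refl => exact hx
  | tail _ hs ih =>
    obtain ⟨r, s, u, v, rfl, rfl, (h | h) | (h | h)⟩ := hs
    · exact hσ _ ih _ (.single ⟨r, s, u, v, rfl, rfl, Or.inl h⟩)
    · obtain ⟨w, hw, hwx⟩ := ih
      exact ⟨w, hw, hwx.tail ⟨r, s, u, v, rfl, rfl, Or.inl h⟩⟩
    · exact hσ _ ih _ (.single ⟨r, s, u, v, rfl, rfl, Or.inr h⟩)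
    · obtain ⟨w, hw, hwx⟩ := ih
      exact ⟨w, hw, hwx.tail ⟨r, s, u, v, rfl, rfl, Or.inr h⟩⟩

lemma closureD_equiv {n : ℕ} {u : Fin n → List A} {ρ π : List A → List A → Prop}
    (hσ : ∀ a b, FamilyRel u a b → π a b) (hρ : ∀ a b, ρ a b → π a b)
    {x y : List A} (hx : x ∈ ClosureD (FamilyRel u) ρ) (hy : y ∈ ClosureD (FamilyRel u) ρ) :
    EqRel π x y := by
  have mem : ∀ w ∈ DWords (FamilyRel u), ∃ i, w = u i := by
    rintro w ⟨z, ⟨i, j, -, h, -⟩ | ⟨i, j, -, -, h⟩⟩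
    exacts [⟨i, h⟩, ⟨j, h⟩]
  obtain ⟨w, hw, hwx⟩ := hx
  obtain ⟨w', hw', hwy⟩ := hy
  obtain ⟨i, rfl⟩ := mem w hw
  obtain ⟨j, rfl⟩ := mem w' hw'
  have hij : EqRel π (u i) (u j) := by
    rcases lt_trichotomy i j with h | h | h
    · exact .single ⟨[], [], u i, u j, by simp, by simp, Or.inl (hσ _ _ ⟨i, j, h, rfl, rfl⟩)⟩
    · rw [h]; exact Relation.ReflTransGen.refl
    · exact .single ⟨[], [], u i, u j, by simp, by simp, Or.inr (hσ _ _ ⟨j, i, h, rfl, rfl⟩)⟩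
  exact ((hwx.mono hρ).symm'.trans hij).trans (hwy.mono hρ)

lemma sim_iff {nu nv : ℕ} {u : Fin nu → List A} {v : Fin nv → List A}
    (hset : SettingHyps (FamilyRel u) (FamilyRel v)) (x y : List A) :
    Sim (FamilyRel u) (FamilyRel v) x y ↔
      x ∈ DTau (FamilyRel u) (FamilyRel v) ∧ EqRel (PiRel (FamilyRel u) (FamilyRel v)) x y := by
  obtain ⟨-, -, -, -, -, h1, h2⟩ := hset
  have comm : ∀ {a b}, EqRel (PiRel (FamilyRel u) (FamilyRel v)) a b →
      EqRel (PiRel (FamilyRel v) (FamilyRel u)) a b :=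
    fun h => h.mono fun _ _ => Or.symm
  constructor
  · rintro (⟨hx, hy⟩ | ⟨hx, hy⟩)
    · exact ⟨Or.inl hx, closureD_equiv (fun _ _ => Or.inl) (fun _ _ => Or.inr) hx hy⟩
    · exact ⟨Or.inr hx, closureD_equiv (fun _ _ => Or.inr) (fun _ _ => Or.inl) hx hy⟩
  · rintro ⟨hx | hx, h⟩
    · exact Or.inl ⟨hx, closureD_closed h1 hx h⟩
    · exact Or.inr ⟨hx, closureD_closed h2 hx (comm h)⟩

lemma replacementSystem_piRel {nu nv : ℕ} {u : Fin nu → List A} {v : Fin nv → List A}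
    (hset : SettingHyps (FamilyRel u) (FamilyRel v)) :
    ReplacementSystem (EqRel (PiRel (FamilyRel u) (FamilyRel v)))
      (DTau (FamilyRel u) (FamilyRel v)) where
  refl _ := Relation.ReflTransGen.refl
  symm h := h.symm'
  trans h h' := Relation.ReflTransGen.trans h h'
  ctx l r h := h.ctx l r
  closed {a b} ha h := by
    rcases (sim_iff hset a b).2 ⟨ha, h⟩ with h | h
    · exact Or.inl h.2
    · exact Or.inr h.2
  two_classes {a b c} ha hb hc hab hbc := by
    have key : ∀ x y, Sim (FamilyRel u) (FamilyRel v) x y →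
        EqRel (PiRel (FamilyRel u) (FamilyRel v)) x y := fun x y h => ((sim_iff hset x y).1 h).2
    have h1 := mt (key a b) hab
    have h2 := mt (key b c) hbc
    apply key
    unfold Sim at *
    unfold DTau at *
    simp only [Set.mem_union] at ha hb hc
    tauto

/-! ### Linear decompositions as lists -/

/-- A member `x` of a linear decomposition together with its complements `p` and `q`. -/
structure Piece (A : Type*) where
  p : List A
  x : List A
  q : List A

/-- The completed word `p x q` of a member. -/
def Piece.d (t : Piece A) : List A := t.p ++ t.x ++ t.q

/-- The compatibility of two consecutive members. -/
def Link (E : List A → List A → Prop) (r t : Piece A) : Prop :=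
  (∃ u, E t.d (r.q ++ u)) ∧ (∃ v, E r.d (v ++ t.p)) ∧ (r.q = [] ∨ t.p = [])

/-- The concatenation of the members. -/
def wordOf (L : List (Piece A)) : List A := (L.map Piece.x).flatten

@[simp] lemma wordOf_nil : wordOf ([] : List (Piece A)) = [] := rfl
@[simp] lemma wordOf_cons (t : Piece A) (L : List (Piece A)) :
    wordOf (t :: L) = t.x ++ wordOf L := rfl
@[simp] lemma wordOf_append (L M : List (Piece A)) :
    wordOf (L ++ M) = wordOf L ++ wordOf M := by simp [wordOf]

/-- A final segment of a linear decomposition: the condition on the first left complement is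
dropped. The empty list is allowed. -/
def IsTail (E : List A → List A → Prop) (D : Set (List A)) (L : List (Piece A)) : Prop :=
  (∀ t ∈ L, t.x ≠ [] ∧ t.d ∈ D) ∧ L.IsChain (Link E) ∧ ∀ t ∈ L.getLast?, t.q = []

/-- A linear decomposition, as a nonempty list of members. -/
def IsDec (E : List A → List A → Prop) (D : Set (List A)) (L : List (Piece A)) : Prop :=
  L ≠ [] ∧ IsTail E D L ∧ ∀ t ∈ L.head?, t.p = []

section

variable {E : List A → List A → Prop} {D : Set (List A)}

lemma IsTail.suffix {L M : List (Piece A)} (h : IsTail E D (L ++ M)) : IsTail E D M := by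
  obtain ⟨h1, h2, h3⟩ := h
  refine ⟨fun t ht => h1 t (by simp [ht]), h2.right_of_append, fun t ht => h3 t ?_⟩
  rw [List.getLast?_append]
  simp only [Option.mem_def] at ht
  simp [ht]

lemma IsTail.isDec {t : Piece A} {L : List (Piece A)} (h : IsTail E D (t :: L)) (hp : t.p = []) :
    IsDec E D (t :: L) :=
  ⟨by simp, h, by simpa using hp⟩

lemma IsDec.take {L M : List (Piece A)} {r : Piece A} (h : IsDec E D (L ++ r :: M))
    (hq : r.q = []) : IsDec E D (L ++ [r]) := by
  obtain ⟨-, ⟨h1, h2, h3⟩, h4⟩ := h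
  refine ⟨by simp, ⟨fun t ht => h1 t ?_, ?_, by simpa using hq⟩, ?_⟩
  · simp only [List.mem_append, List.mem_cons, List.not_mem_nil, or_false] at ht ⊢
    tauto
  · have : (L ++ [r] ++ M).IsChain (Link E) := by simpa using h2
    exact this.left_of_append
  · cases L <;> simpa using h4

lemma IsTail.link {L M : List (Piece A)} {r t : Piece A} (h : IsTail E D (L ++ r :: t :: M)) :
    Link E r t :=
  (List.isChain_append_cons_cons.1 h.2.1).2.1

/-- A decomposition can be continued by a final segment of another one: the last right complement
is empty, so only one of the two compatibility conditions remains. -/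
lemma IsDec.glue (hE : ReplacementSystem E D) {L M : List (Piece A)} {t t' : Piece A} (h : IsDec E D (L ++ [t]))
    (hT : IsTail E D (t' :: M)) (hv : ∃ v, E t.d (v ++ t'.p)) :
    IsDec E D (L ++ [t] ++ t' :: M) := by
  obtain ⟨-, ⟨h1, h2, h3⟩, h4⟩ := h
  obtain ⟨g1, g2, g3⟩ := hT
  have hq : t.q = [] := by simpa using h3
  refine ⟨by simp, ⟨?_, ?_, ?_⟩, ?_⟩
  · intro s hs
    rcases List.mem_append.1 hs with hs | hs
    · exact h1 s hs
    · exact g1 s hs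
  · refine h2.append g2 ?_
    simp only [List.getLast?_concat, List.head?_cons, Option.mem_def, Option.some.injEq]
    rintro _ rfl _ rfl
    exact ⟨⟨t'.d, by simpa [hq] using hE.refl _⟩, hv, Or.inl hq⟩
  · intro s hs
    apply g3 s
    rw [List.getLast?_append] at hs
    simpa [List.getLast?_cons] using hs
  · cases L <;> simpa using h4

/-- What precedes a member of a decomposition can be rewritten so as to end in its left
complement. -/
lemma prefix_equiv (hE : ReplacementSystem E D) {L M : List (Piece A)} {t : Piece A} (h : IsDec E D (L ++ t :: M)) :
    ∃ s, E (wordOf L) (s ++ t.p) := by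
  induction L using List.reverseRecOn generalizing t M with
  | nil =>
    have hp : t.p = [] := by simpa using h.2.2
    exact ⟨[], by simpa [hp] using hE.refl []⟩
  | append_singleton L r ih =>
    have h' : IsDec E D (L ++ r :: t :: M) := by simpa using h
    obtain ⟨-, ⟨v, hv⟩, hq | hp⟩ := h'.2.1.link
    · obtain ⟨s, hs⟩ := ih h'
      refine ⟨s ++ v, hE.trans (by simpa using hE.ctx [] r.x hs) ?_⟩
      simpa [Piece.d, hq] using hE.ctx s [] hv
    · exact ⟨wordOf (L ++ [r]), by simpa [hp] using hE.refl _⟩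

/-- What follows a member of a decomposition can be rewritten so as to begin with its right
complement. -/
lemma suffix_equiv (hE : ReplacementSystem E D) {M : List (Piece A)} {t : Piece A} (h : IsTail E D (t :: M)) :
    ∃ s, E (wordOf M) (t.q ++ s) := by
  induction M generalizing t with
  | nil =>
    have hq : t.q = [] := by simpa using h.2.2
    exact ⟨[], by simpa [hq] using hE.refl []⟩
  | cons r M ih =>
    obtain ⟨⟨v, hv⟩, -, hq | hp⟩ := IsTail.link (L := []) h
    · exact ⟨wordOf (r :: M), by simpa [hq] using hE.refl _⟩
    · obtain ⟨s, hs⟩ := ih (IsTail.suffix (L := [t]) h)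
      refine ⟨v ++ s, hE.trans (by simpa using hE.ctx r.x [] hs) ?_⟩
      simpa [Piece.d, hp] using hE.ctx [] s hv

lemma exists_split {M : List (Piece A)} {e y : List A} (h : wordOf M = e ++ y) (hy : y ≠ []) :
    ∃ M₁ t M₂ y₁ y₂, M = M₁ ++ t :: M₂ ∧ t.x = y₁ ++ y₂ ∧ y₂ ≠ [] ∧ e = wordOf M₁ ++ y₁ ∧
      y = y₂ ++ wordOf M₂ := by
  induction M generalizing e with
  | nil => simp_all
  | cons t M ih =>
    rw [wordOf_cons, List.append_eq_append_iff] at h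
    rcases h with ⟨as, rfl, h⟩ | ⟨bs, h, rfl⟩
    · obtain ⟨M₁, t', M₂, y₁, y₂, rfl, h1, h2, rfl, rfl⟩ := ih h
      exact ⟨t :: M₁, t', M₂, y₁, y₂, rfl, h1, h2, by simp, rfl⟩
    · by_cases hb : bs = []
      · subst hb
        obtain ⟨M₁, t', M₂, y₁, y₂, rfl, h1, h2, h3, h4⟩ := ih (e := []) rfl
        have h5 : wordOf M₁ = [] ∧ y₁ = [] := List.append_eq_nil_iff.1 h3.symm
        exact ⟨t :: M₁, t', M₂, y₁, y₂, rfl, h1, h2, by simp [h, h5], h4⟩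
      · exact ⟨[], t, M, e, bs, rfl, h, hb, rfl, rfl⟩

/-- Gluing when the common part `e` is a suffix of the last member of the first decomposition. The
members of the second one inside `e` are deleted, and the part inside `e` of the member at the end
of `e` is moved to its left complement. -/
lemma glue_of_suffix (hE : ReplacementSystem E D) {L M : List (Piece A)} {t : Piece A}
    {a e y : List A} (hL : IsDec E D (L ++ [t])) (ht : t.x = a ++ e) (hM : IsDec E D M)
    (hMe : wordOf M = e ++ y) (hy : y ≠ []) :
    ∃ N, IsDec E D N ∧ wordOf N = wordOf L ++ a ++ e ++ y := by
  obtain ⟨M₁, t', M₂, y₁, y₂, rfl, h1, h2, rfl, rfl⟩ := exists_split hMe hy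
  have hq : t.q = [] := by simpa using hL.2.1.2.2
  obtain ⟨s, hs⟩ := prefix_equiv hE hM
  let r : Piece A := ⟨t'.p ++ y₁, y₂, t'.q⟩
  have hd : r.d = t'.d := by simp [r, Piece.d, h1]
  have hT : IsTail E D (r :: M₂) := by
    obtain ⟨g1, g2, g3⟩ := hM.2.1.suffix
    refine ⟨?_, ?_, ?_⟩
    · intro z hz
      rcases List.mem_cons.1 hz with rfl | hz
      · exact ⟨h2, hd ▸ (g1 t' (by simp)).2⟩
      · exact g1 z (by simp [hz])
    · rw [List.isChain_cons] at g2 ⊢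
      refine ⟨fun z hz => ?_, g2.2⟩
      simpa only [Link, hd] using g2.1 z hz
    · cases M₂ <;> simpa using g3
  refine ⟨_, hL.glue hE hT ⟨t.p ++ a ++ s, ?_⟩, by simp [ht, r]⟩
  have := hE.ctx (t.p ++ a) y₁ hs
  simpa [Piece.d, hq, ht, r] using this

/-! ### Gluing along an arbitrary overlap -/

/-- The gluing lemma for list decompositions; square-freeness enters through `hsq`. -/
lemma glue (hE : ReplacementSystem E D) {L M : List (Piece A)} {x e y : List A}
    (hL : IsDec E D L) (hLe : wordOf L = x ++ e) (hM : IsDec E D M) (hMe : wordOf M = e ++ y)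
    (hsq : ∀ a b c, E (x ++ e ++ y) (a ++ b ++ b ++ c) → b = []) :
    ∃ N, IsDec E D N ∧ wordOf N = x ++ e ++ y := by
  induction hn : e.length using Nat.strong_induction_on generalizing L M x e y with
  | _ n ih =>
  subst hn
  by_cases hy : y = []
  · exact ⟨L, hL, by simp [hLe, hy]⟩
  obtain ⟨L₁, t, rfl⟩ : ∃ L₁ t, L = L₁ ++ [t] :=
    ⟨_, _, (List.dropLast_append_getLast hL.1).symm⟩
  have htq : t.q = [] := by simpa using hL.2.1.2.2
  have htx := hL.2.1.1 t (by simp)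
  have hLe' : wordOf L₁ ++ t.x = x ++ e := by simpa using hLe
  rcases List.append_eq_append_iff.1 hLe' with ⟨a, rfl, ha⟩ | ⟨e', he', rfl⟩
  · exact glue_of_suffix hE hL ha hM hMe hy
  by_cases hne : e' = []
  · subst hne
    obtain ⟨N, hN, hN'⟩ := glue_of_suffix hE (a := []) hL rfl hM (by simpa using hMe) hy
    exact ⟨N, hN, by simp [hN', he']⟩
  obtain ⟨L₀, r, rfl⟩ : ∃ L₀ r, L₁ = L₀ ++ [r] := by
    have : L₁ ≠ [] := by
      rintro rfl
      exact hne (List.append_eq_nil_iff.1 he'.symm).2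
    exact ⟨_, _, (List.dropLast_append_getLast this).symm⟩
  have hL' : IsDec E D (L₀ ++ r :: t :: []) := by simpa using hL
  have hrx := hL.2.1.1 r (by simp)
  by_cases hrq : r.q = []
  · have hlt : e'.length < (e' ++ t.x).length := by
      simpa using List.length_pos_of_ne_nil htx.1
    obtain ⟨N, hN, hN'⟩ := ih _ hlt (y := t.x ++ y) (hL'.take hrq) he' hM (by simp [hMe])
      (by simpa using hsq) rfl
    exact ⟨N, hN, by simp [hN']⟩
  obtain ⟨⟨u, hu⟩, -, hp⟩ := hL'.2.1.link
  have htp : t.p = [] := hp.resolve_left hrq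
  have htd : t.d = t.x := by simp [Piece.d, htp, htq]
  rw [htd] at hu htx
  obtain ⟨s, hs⟩ := prefix_equiv hE hL'
  -- The whole word, with the part before the member `r` rewritten.
  have hw : E (x ++ (e' ++ t.x) ++ y) (s ++ r.p ++ r.x ++ t.x ++ y) := by
    have := hE.ctx [] (r.x ++ t.x ++ y) hs
    have h2 : x ++ (e' ++ t.x) ++ y = wordOf L₀ ++ r.x ++ t.x ++ y := by
      rw [← hLe]; simp
    rw [h2]
    simpa using this
  -- `r.d` and `t.d = t.x` lie in different classes: otherwise replacing `t.x` by `r.d` doubles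
  -- `r.p ++ r.x`.
  have hrt : ¬ E r.d t.x := by
    intro h
    have := hsq s (r.p ++ r.x) (r.q ++ y)
      (hE.trans hw (by simpa [Piece.d] using hE.ctx (s ++ r.p ++ r.x) y (hE.symm h)))
    exact hrx.1 (List.append_eq_nil_iff.1 this).2
  obtain ⟨M₁, t', M₂, y₁, y₂, rfl, h1, h2, h3, rfl⟩ := exists_split hMe hy
  have ht' := hM.2.1.1 t' (by simp)
  have hT := hM.2.1.suffix
  obtain ⟨s', hs'⟩ := suffix_equiv hE hT
  by_cases htt : E t.x t'.d
  · have e2 := hE.ctx (x ++ e') (y₂ ++ t'.q ++ s') htt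
    have e1 := hE.ctx (x ++ e' ++ t.x ++ y₂) [] hs'
    -- `t.x ⋯` has become `t'.p y₁ (y₂ q) (y₂ q) ⋯`, where `q` is the right complement of `t'`.
    have := hsq (x ++ e' ++ t'.p ++ y₁) (y₂ ++ t'.q) s'
      (hE.trans (by simpa using e1) (by simpa [Piece.d, h1] using e2))
    exact absurd (List.append_eq_nil_iff.1 this).1 h2
  rcases List.append_eq_append_iff.1 h3 with ⟨c, hc, hc'⟩ | ⟨c, rfl, hc⟩
  · -- `t.x = c ++ y₁`: the member `t` reaches back beyond the beginning of `t'`.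
    obtain ⟨M₀, r', rfl⟩ : ∃ M₀ r', M₁ = M₀ ++ [r'] := by
      have : M₁ ≠ [] := by
        rintro rfl
        exact hne (List.append_eq_nil_iff.1 hc.symm).1
      exact ⟨_, _, (List.dropLast_append_getLast this).symm⟩
    have hM' : IsDec E D (M₀ ++ r' :: t' :: M₂) := by simpa using hM
    obtain ⟨-, ⟨v, hv⟩, hp'⟩ := hM'.2.1.link
    by_cases hrq' : r'.q = []
    · obtain ⟨z, hz⟩ := prefix_equiv hE hM'
      have hr' := hM'.2.1.1 r' (by simp)
      have hw2 : E (x ++ (e' ++ t.x) ++ (y₂ ++ wordOf M₂))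
          (x ++ z ++ r'.d ++ y₁ ++ y₂ ++ wordOf M₂) := by
        rw [h3]
        simpa [Piece.d, hrq'] using hE.ctx x (r'.x ++ y₁ ++ y₂ ++ wordOf M₂) hz
      -- Replacing `r'.d` by `t'.d` would double `t'.x ++ t'.q`, so `r'.d` lies in the class of
      -- `t.x`.
      have hrt' : ¬ E t'.d r'.d := by
        intro h
        have e1 := hE.ctx (x ++ z ++ r'.d ++ y₁ ++ y₂) [] hs'
        have e2 := hE.ctx (x ++ z) (y₁ ++ y₂ ++ t'.q ++ s') (hE.symm h)
        have := hsq (x ++ z ++ t'.p) (y₁ ++ y₂ ++ t'.q) s'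
          (hE.trans hw2 (hE.trans (by simpa using e1) (by simpa [Piece.d, h1] using e2)))
        exact h2 (List.append_eq_nil_iff.1 (List.append_eq_nil_iff.1 this).1).2
      have htr : E t.x r'.d := hE.two_classes htx.2 ht'.2 hr'.2 htt hrt'
      -- Replacing `r'.d` by `t.x = c ++ y₁` doubles `y₁`.
      have hy₁ : y₁ = [] := by
        have e1 := hE.ctx (x ++ z) (y₁ ++ y₂ ++ wordOf M₂) (hE.symm htr)
        refine hsq (x ++ z ++ c) y₁ (y₂ ++ wordOf M₂) (hE.trans hw2 ?_)
        rw [hc'] at e1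
        simpa using e1
      refine ⟨_, hL.glue hE hT ⟨v, by rw [htd]; exact hE.trans htr hv⟩, ?_⟩
      rw [wordOf_append, wordOf_append, he']
      simp [h1, hy₁]
    · obtain ⟨N, hN, hN'⟩ := glue_of_suffix hE hL hc' (hT.isDec (hp'.resolve_left hrq'))
        (y := y₂ ++ wordOf M₂) (by simp [h1]) hy
      exact ⟨N, hN, by simp [hN', he', hc']⟩
  · -- `y₁ = c ++ t.x`: rewriting `r.d` to `t'.d` and `t.x` to `r.q u` creates a square.
    have hrt' : E r.d t'.d := hE.two_classes hrx.2 htx.2 ht'.2 hrt htt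
    have e1 := hE.ctx (s ++ r.p ++ r.x ++ t.x ++ y₂) [] hs'
    have e2 := hE.ctx (s ++ r.p ++ r.x) (y₂ ++ t'.q ++ s') hu
    have e3 := hE.ctx s (u ++ y₂ ++ t'.q ++ s') hrt'
    have e4 := hE.ctx (s ++ t'.p ++ c) (y₂ ++ t'.q ++ u ++ y₂ ++ t'.q ++ s') hu
    have := hsq (s ++ t'.p ++ c ++ r.q) (u ++ y₂ ++ t'.q) s'
      (hE.trans hw (hE.trans (by simpa using e1) (hE.trans (by simpa using e2)
        (hE.trans (by simpa [Piece.d] using e3) (by simpa [Piece.d, h1, hc] using e4)))))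
    exact absurd (List.append_eq_nil_iff.1 (List.append_eq_nil_iff.1 this).1).2 h2

end

/-! ### Indexed decompositions and lists -/

/-- The words with a linear decomposition are exactly the words of list decompositions. -/
lemma mem_linAll_iff {nu nv : ℕ} {u : Fin nu → List A} {v : Fin nv → List A}
    (hset : SettingHyps (FamilyRel u) (FamilyRel v)) (w : List A) :
    w ∈ LinAll (FamilyRel u) (FamilyRel v) ↔
      ∃ L, IsDec (EqRel (PiRel (FamilyRel u) (FamilyRel v)))
        (DTau (FamilyRel u) (FamilyRel v)) L ∧ wordOf L = w := by
  constructor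
  · rintro ⟨-, m, hm, -, x, p, q, ⟨-, hx, ⟨a, b, ha, hb⟩, hpq, hp, hq, h1⟩, rfl⟩
    refine ⟨(List.range' 1 m).map fun i => ⟨p i, x i, q i⟩, ⟨?_, ⟨?_, ?_, ?_⟩, ?_⟩, ?_⟩
    · simp; omega
    · intro t ht
      simp only [List.mem_map, List.mem_range'_1] at ht
      obtain ⟨i, ⟨hi, hi'⟩, rfl⟩ := ht
      refine ⟨hx i hi (by omega), ?_⟩
      rcases Nat.lt_or_ge 1 i with h | h
      · exact ((sim_iff hset _ _).1 (ha i h (by omega))).1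
      · obtain rfl : i = 1 := by omega
        by_cases hm1 : m = 1
        · subst hm1
          simpa [Piece.d, hp, hq] using h1 rfl
        · exact ((sim_iff hset _ _).1 (hb 1 hi (by omega))).1
    · rw [List.isChain_map, List.isChain_iff_getElem]
      intro i hi
      simp only [List.length_range'] at hi
      simp only [List.getElem_range']
      have e : 1 + 1 * (i + 1) = (1 + 1 * i) + 1 := by ring
      rw [e]
      have h2 := ((sim_iff hset _ _).1 (ha (1 + 1 * i + 1) (by omega) (by omega))).2
      have h3 := ((sim_iff hset _ _).1 (hb (1 + 1 * i) (by omega) (by omega))).2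
      exact ⟨⟨_, h2⟩, ⟨_, h3⟩, hpq (1 + 1 * i) (by omega) (by omega)⟩
    · obtain ⟨k, rfl⟩ : ∃ k, m = k + 1 := ⟨m - 1, by omega⟩
      rw [List.range'_concat]
      simpa [add_comm] using hq
    · obtain ⟨k, rfl⟩ : ∃ k, m = k + 1 := ⟨m - 1, by omega⟩
      rw [List.range'_succ]
      simpa using hp
    · simp [wordOf, wordSeg, Function.comp_def]
  · rintro ⟨L, ⟨hne, ⟨h1, h2, h3⟩, h4⟩, rfl⟩
    have hlen := List.length_pos_of_ne_nil hne
    let g : ℕ → Piece A := fun i => (L[i - 1]?).getD ⟨[], [], []⟩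
    have hg : ∀ i, 1 ≤ i → i ≤ L.length → g i ∈ L := by
      intro i hi hi'
      have : i - 1 < L.length := by omega
      simp [g, this]
    have hl : ∀ i, 1 ≤ i → i < L.length →
        Link (EqRel (PiRel (FamilyRel u) (FamilyRel v))) (g i) (g (i + 1)) := by
      intro i hi hi'
      obtain ⟨j, rfl⟩ : ∃ j, i = j + 1 := ⟨i - 1, by omega⟩
      have := List.isChain_iff_getElem.1 h2 j hi'
      have hj : j < L.length := by omega
      simpa [g, hi', hj] using this
    have hu : ∀ i, ∃ a, 1 < i → i ≤ L.length →
        Sim (FamilyRel u) (FamilyRel v) (g i).d ((g (i - 1)).q ++ a) := by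
      intro i
      by_cases hi : 1 < i ∧ i ≤ L.length
      · have := hl (i - 1) (by omega) (by omega)
        rw [Nat.sub_add_cancel hi.1.le] at this
        obtain ⟨⟨a, ha⟩, -⟩ := this
        exact ⟨a, fun _ _ => (sim_iff hset _ _).2 ⟨(h1 _ (hg i hi.1.le hi.2)).2, ha⟩⟩
      · exact ⟨[], fun h h' => absurd ⟨h, h'⟩ hi⟩
    have hv : ∀ i, ∃ b, 1 ≤ i → i < L.length →
        Sim (FamilyRel u) (FamilyRel v) (g i).d (b ++ (g (i + 1)).p) := by
      intro i
      by_cases hi : 1 ≤ i ∧ i < L.length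
      · obtain ⟨-, ⟨b, hb⟩, -⟩ := hl i hi.1 hi.2
        exact ⟨b, fun _ _ => (sim_iff hset _ _).2 ⟨(h1 _ (hg i hi.1 hi.2.le)).2, hb⟩⟩
      · exact ⟨[], fun h h' => absurd ⟨h, h'⟩ hi⟩
    choose a ha using hu
    choose b hb using hv
    have hp : (g 1).p = [] := h4 _ (by simp [g, hlen, List.head?_eq_getElem?])
    have hq : (g L.length).q = [] := h3 _ (by
      have : L.length - 1 < L.length := by omega
      simp [g, this, List.getLast?_eq_getElem?])
    refine ⟨L.length, L.length, hlen, le_rfl, fun i => (g i).x, fun i => (g i).p,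
      fun i => (g i).q, ⟨hlen, fun i hi hi' => (h1 _ (hg i hi hi')).1, ⟨a, b, ha, hb⟩,
        fun i hi hi' => (hl i hi hi').2.2, hp, hq, fun hn => ?_⟩, ?_⟩
    · have := (h1 _ (hg 1 le_rfl hlen)).2
      rw [hn] at hq
      simpa [Piece.d, hp, hq] using this
    · have : L = (List.range' 1 L.length).map g := by
        refine List.ext_getElem (by simp) fun i hi _ => ?_
        simp [g, hi]
      conv_lhs => rw [this]
      simp [wordOf, wordSeg, Function.comp_def]


/-- Lemma 6: if `x·e ∈ Lin`, `e·y ∈ Lin` and `x·e·y` is square-free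
relative to `π`, then `x·e·y ∈ Lin`. -/
theorem linAll_glue {A : Type*} {nu nv : ℕ}
    (u : Fin nu → List A) (v : Fin nv → List A)
    (hu : Function.Injective u) (hv : Function.Injective v)
    (σ ρ : List A → List A → Prop) (hσ : σ = FamilyRel u) (hρ : ρ = FamilyRel v)
    (hset : SettingHyps σ ρ)
    (x y e : List A)
    (h1 : x ++ e ∈ LinAll σ ρ) (h2 : e ++ y ∈ LinAll σ ρ)
    (h3 : SFRel (PiRel σ ρ) (x ++ e ++ y)) :
    x ++ e ++ y ∈ LinAll σ ρ := by
  subst hσ hρ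
  obtain ⟨L, hL, hLw⟩ := (mem_linAll_iff hset _).1 h1
  obtain ⟨M, hM, hMw⟩ := (mem_linAll_iff hset _).1 h2
  exact (mem_linAll_iff hset _).2 (glue (replacementSystem_piRel hset) hL hLw hM hMw
    fun a b c h => h3 _ h a b c rfl)

end SqFreePaper
end

section
/- Every word w that is square-free relative to π can be written as w = r_1·x_1·r_2·x_2 ⋯ r_n·x_n·r_{n+1} (n ≥ 0), where each r_i contains no defining word of π as a factor, and each occurrence (r_1·x_1 ⋯ r_i, x_i, r_{i+1} ⋯ x_n·r_{n+1}) is a maximal occurrence of a linearly decomposable word in w. -/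
/-!
Two facts carry the proof.

**Overlapping linearly decomposable words merge** (`Laws.union`). Under the standing hypotheses
each of `D̄_σ`, `D̄_ρ` is a class of the congruence `=_π`. Hence a member
`p_i x_i q_i` of a linear decomposition can be exposed: replacing only what lies outside `x_i`, the
word is `=_π` to one that contains `p_i x_i q_i` (`Pre.left`, `Suf.right`). If two exposed
words of the same class overlap or touch, replacing one by the other produces a square; so
consecutive members lie in different classes (`Laws.alternate`). Now let `X = x_1 ⋯ x_n` and
`Y = y_1 ⋯ y_m` be linearly decomposable, with `Y` starting after the nonempty prefix `x_i'` of
`x_i = x_i' x_i''` and ending after `X`.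
* If `q_i = []`, the members `x_1, …, x_i` followed by what remains of `Y` after `x_i''` form
  a linear decomposition of the union.
* If `q_i ≠ []`, then `p_{i+1} = []`, and squares exclude that `y_1 q'_1` and `p_i x_i q_i` share a
  class. As there are only two classes, `y_1 q'_1 ~ x_{i+1} q_{i+1} ~ q_i u_{i+1}`. When `x_i''` is
  empty, `x_1, …, x_i, y_1, …, y_m` is a linear decomposition. When `x_i''` is nonempty, a square
  appears: `x_i'' x_i''` if `x_i''` is a prefix of `y_1`; otherwise a square obtained from `y_2`,
  which then lies in the class of `p_i x_i q_i`.

**Greedy factorization** (`greedy`). Read `w` from the left, repeatedly taking the leftmost and,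
among these, longest occurrence of a word of `Lin` in the remaining suffix. Merging shows that no
occurrence straddles the end of the one taken, so each one taken is maximal. Every defining word is
nonempty (otherwise a word `y y w` with `y ≠ []` would be `=_π w`), hence lies in `Lin(1)`, so no gap
contains a defining word.
-/

namespace SqFreePaper

variable {A : Type*}

/-! ### The congruence and its two distinguished classes -/

/-- The properties of `E` (playing the role of `=_π`) and `S` (playing the role of `~`) needed for
merging: `E` is a congruence, and `S` relates words lying in the same one of at most two
distinguished `E`-classes. Membership in one of these classes is expressed as `S x x`. -/
structure Laws (E S : List A → List A → Prop) : Prop where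
  refl : ∀ x, E x x
  symm : ∀ {x y}, E x y → E y x
  trans : ∀ {x y z}, E x y → E y z → E x z
  app : ∀ a b {x y}, E x y → E (a ++ x ++ b) (a ++ y ++ b)
  ssymm : ∀ {x y}, S x y → S y x
  toE : ∀ {x y}, S x y → E x y
  closed : ∀ {x y z}, S x y → E y z → S x z
  tri : ∀ {x y z}, S x x → S y y → S z z → S x y ∨ S y z ∨ S x z

/-- Every word `E`-related to `t` is square-free. -/
def SF (E : List A → List A → Prop) (t : List A) : Prop :=
  ∀ z, E t z → IsSquareFreeWord z

/-- `Pre S a p x q`: the word `a ++ x` is the concatenation `x_1 ⋯ x_i` of the initial members of a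
linear decomposition, the last of them being `x` with complementary members `p` and `q`. -/
inductive Pre (S : List A → List A → Prop) :
    List A → List A → List A → List A → Prop
  | base {x q} : x ≠ [] → S (x ++ q) (x ++ q) → Pre S [] [] x q
  | step {a p x q p' x' r} (u v : List A) : Pre S a p x q →
      S (p ++ x ++ q) (v ++ p') → S (p' ++ x' ++ r) (q ++ u) → (q = [] ∨ p' = []) → x' ≠ [] →
      Pre S (a ++ x) p' x' r

/-- `Suf S p x q b`: the word `x ++ b` is the concatenation `x_i ⋯ x_n` of the final members of a
linear decomposition, the first of them being `x` with complementary members `p` and `q`. -/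
inductive Suf (S : List A → List A → Prop) :
    List A → List A → List A → List A → Prop
  | base {p x} : x ≠ [] → S (p ++ x) (p ++ x) → Suf S p x [] []
  | step {p x q p' x' q' b} (u v : List A) : x ≠ [] → Suf S p' x' q' b →
      S (p ++ x ++ q) (v ++ p') → S (p' ++ x' ++ q') (q ++ u) → (q = [] ∨ p' = []) →
      Suf S p x q (x' ++ b)

variable {E S : List A → List A → Prop}

namespace Laws

lemma self_left (h : Laws E S) {x y : List A} (hs : S x y) : S x x :=
  h.closed hs (h.symm (h.toE hs))

lemma strans (h : Laws E S) {x y z : List A} (h1 : S x y) (h2 : S y z) : S x z :=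
  h.closed h1 (h.toE h2)

lemma noSq {t a s b : List A} (ht : SF E t) (hE : E t (a ++ s ++ s ++ b)) : s = [] :=
  ht _ hE a s b rfl

lemma SF_factor (h : Laws E S) {a t b : List A} (ht : SF E (a ++ t ++ b)) : SF E t := by
  intro z hz u s v hzv
  refine ht _ (h.app a b hz) (a ++ u) s (v ++ b) ?_
  simp [hzv]

end Laws

/-! ### Initial and final segments of linear decompositions -/

lemma Pre.ne {a p x q : List A} (hp : Pre S a p x q) : x ≠ [] := by
  cases hp <;> assumption

lemma Suf.ne {p x q b : List A} (hp : Suf S p x q b) : x ≠ [] := by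
  cases hp <;> assumption

lemma Pre.self (h : Laws E S) {a p x q : List A} (hp : Pre S a p x q) :
    S (p ++ x ++ q) (p ++ x ++ q) := by
  cases hp with
  | base h1 h2 => simpa using h2
  | step u v h1 h2 h3 h4 h5 => exact h.self_left h3

lemma Suf.self (h : Laws E S) {p x q b : List A} (hp : Suf S p x q b) :
    S (p ++ x ++ q) (p ++ x ++ q) := by
  cases hp with
  | base h1 h2 => simpa using h2
  | step u v h1 h2 h3 h4 h5 => exact h.self_left h3

/-- The left complementary member of a member can be exposed by rewriting the preceding members. -/
lemma Pre.left (h : Laws E S) {a p x q : List A} (hp : Pre S a p x q) :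
    ∃ L, E a (L ++ p) := by
  induction hp with
  | base => exact ⟨[], h.refl _⟩
  | @step a p x q p' x' q' u v h1 h2 h3 h4 h5 ih =>
    obtain ⟨L, hL⟩ := ih
    rcases h4 with rfl | rfl
    · refine ⟨L ++ v, ?_⟩
      have e1 := h.app [] x hL
      have e2 := h.app L [] (h.toE h2)
      simp only [List.nil_append, List.append_nil, List.append_assoc] at e1 e2 ⊢
      exact h.trans e1 e2
    · exact ⟨a ++ x, by simpa using h.refl _⟩

/-- The right complementary member of a member can be exposed by rewriting the following members. -/
lemma Suf.right (h : Laws E S) {p x q b : List A} (hp : Suf S p x q b) :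
    ∃ R, E b (q ++ R) := by
  induction hp with
  | base => exact ⟨[], h.refl _⟩
  | @step p x q p' x' q' b u v h1 h2 h3 h4 h5 ih =>
    obtain ⟨R, hR⟩ := ih
    rcases h5 with rfl | rfl
    · exact ⟨x' ++ b, by simpa using h.refl _⟩
    · refine ⟨u ++ R, ?_⟩
      have e1 := h.app x' [] hR
      have e2 := h.app [] R (h.toE h4)
      simp only [List.nil_append, List.append_nil, List.append_assoc] at e1 e2 ⊢
      exact h.trans e1 e2

/-- The words with a linear decomposition, described by their last member. -/
def Lin' (S : List A → List A → Prop) (e : List A) : Prop :=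
  ∃ a p x, Pre S a p x [] ∧ e = a ++ x

/-- An initial and a final segment sharing the member `(p, x, q)` fit together. -/
lemma glue_s18 {a p x q b : List A} (hs : Suf S p x q b) (hp : Pre S a p x q) :
    Lin' S (a ++ x ++ b) := by
  induction hs generalizing a with
  | base => exact ⟨_, _, _, hp, by simp⟩
  | step u v h1 h2 h3 h4 h5 ih =>
    have := ih (Pre.step u v hp h3 h4 h5 h2.ne)
    simpa using this

/-- Cutting off a prefix `s` of the first member moves `s` into its left complementary member. -/
lemma Suf.cut {p s x q b : List A} (hs : Suf S p (s ++ x) q b) (hx : x ≠ []) :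
    Suf S (p ++ s) x q b := by
  generalize hy : s ++ x = y at hs
  cases hs with
  | base h1 h2 => subst hy; exact Suf.base hx (by simpa using h2)
  | step u v h1 h2 h3 h4 h5 =>
    subst hy; exact Suf.step u v hx h2 (by simpa using h3) h4 h5

/-- The member containing the last letter of the nonempty prefix `s`. -/
lemma splitLeft {a p x q b : List A} (hp : Pre S a p x q) (hs : Suf S p x q b)
    {s t : List A} (hst : a ++ x ++ b = s ++ t) (hs0 : s ≠ [])
    (hlen : s.length ≤ (a ++ x).length) :
    ∃ a' p' x1 x2 q' b', Pre S a' p' (x1 ++ x2) q' ∧ Suf S p' (x1 ++ x2) q' b' ∧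
      s = a' ++ x1 ∧ t = x2 ++ b' ∧ x1 ≠ [] := by
  -- The induction walks back from `(p, x, q)`; this settles the case in which `x` is the member.
  have key : ∀ {a p x q b : List A}, Pre S a p x q → Suf S p x q b → a ++ x ++ b = s ++ t →
      s.length ≤ (a ++ x).length → a.length < s.length →
      ∃ a' p' x1 x2 q' b', Pre S a' p' (x1 ++ x2) q' ∧ Suf S p' (x1 ++ x2) q' b' ∧
      s = a' ++ x1 ∧ t = x2 ++ b' ∧ x1 ≠ [] := by
    intro a p x q b hp hs hst hlen hl
    obtain ⟨c, hc, rfl⟩ | ⟨c, hc, hc'⟩ := List.append_eq_append_iff.1 hst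
    · obtain rfl : c = [] := by
        have := congrArg List.length hc
        simp only [List.length_append] at this hlen
        exact List.eq_nil_of_length_eq_zero (by omega)
      exact ⟨a, p, x, [], q, t, by simpa using hp, by simpa using hs, by simpa using hc, by simp,
        hp.ne⟩
    · obtain ⟨d, hd, hd'⟩ | ⟨d, hd, hd'⟩ := List.append_eq_append_iff.1 hc
      · subst hd'
        refine ⟨a, p, d, c, q, b, hp, hs, hd, hc', ?_⟩
        rintro rfl
        simp [hd] at hl
      · simp [hd] at hl
  induction hp generalizing b with
  | base h1 h2 =>
    refine key (Pre.base h1 h2) hs hst hlen ?_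
    simpa [List.length_pos_iff] using hs0
  | @step a p x q p' x' q' u v h1 h2 h3 h4 h5 ih =>
    by_cases hl : (a ++ x).length < s.length
    · exact key (Pre.step u v h1 h2 h3 h4 h5) hs hst hlen hl
    · exact ih (Suf.step u v h1.ne hs h2 h3 h4) (by simpa using hst) (by omega)

/-- The member containing the first letter after the prefix `s`. -/
lemma splitRight {a p x q b : List A} (hp : Pre S a p x q) (hs : Suf S p x q b)
    {s t : List A} (hst : a ++ x ++ b = s ++ t)
    (hlen : s.length < (a ++ x).length) :
    ∃ a' p' x1 x2 q' b', Pre S a' p' (x1 ++ x2) q' ∧ Suf S p' (x1 ++ x2) q' b' ∧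
      s = a' ++ x1 ∧ t = x2 ++ b' ∧ x2 ≠ [] := by
  -- The induction walks back from `(p, x, q)`; this settles the case in which `x` is the member.
  have key : ∀ {a p x q b : List A}, Pre S a p x q → Suf S p x q b → a ++ x ++ b = s ++ t →
      s.length < (a ++ x).length → a.length ≤ s.length →
      ∃ a' p' x1 x2 q' b', Pre S a' p' (x1 ++ x2) q' ∧ Suf S p' (x1 ++ x2) q' b' ∧
      s = a' ++ x1 ∧ t = x2 ++ b' ∧ x2 ≠ [] := by
    intro a p x q b hp hs hst hlen hl
    obtain ⟨c, hc, rfl⟩ | ⟨c, hc, hc'⟩ := List.append_eq_append_iff.1 hst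
    · simp [hc] at hlen
    · have hc0 : c ≠ [] := by
        rintro rfl
        simp [hc] at hlen
      obtain ⟨d, hd, hd'⟩ | ⟨d, hd, hd'⟩ := List.append_eq_append_iff.1 hc
      · subst hd'
        exact ⟨a, p, d, c, q, b, hp, hs, hd, hc', hc0⟩
      · obtain rfl : d = [] := by
          simp [hd] at hl
          exact hl
        refine ⟨a, p, [], x, q, b, hp, hs, by simpa using hd.symm, ?_, hp.ne⟩
        simp at hd'
        rw [hc', hd']
  induction hp generalizing b with
  | base h1 h2 => exact key (Pre.base h1 h2) hs hst hlen (by simp)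
  | @step a p x q p' x' q' u v h1 h2 h3 h4 h5 ih =>
    by_cases hl : (a ++ x).length ≤ s.length
    · exact key (Pre.step u v h1 h2 h3 h4 h5) hs hst hlen hl
    · exact ih (Suf.step u v h1.ne hs h2 h3 h4) (by simpa using hst) (by omega)

/-- The first member of a linear decomposition. -/
lemma first {a p x q b : List A} (hp : Pre S a p x q) (hs : Suf S p x q b) :
    ∃ y q' b', Pre S [] [] y q' ∧ Suf S [] y q' b' ∧ a ++ x ++ b = y ++ b' := by
  induction hp generalizing b with
  | base h1 h2 => exact ⟨_, _, _, Pre.base h1 h2, hs, by simp⟩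
  | @step a p x q p' x' q' u v h1 h2 h3 h4 h5 ih =>
    obtain ⟨y, q', b', k1, k2, k3⟩ := ih (Suf.step u v h1.ne hs h2 h3 h4)
    exact ⟨y, q', b', k1, k2, by simpa using k3⟩

/-! ### Merging overlapping words -/

namespace Laws

/-- Consecutive members of a linear decomposition lie in different classes. -/
lemma alternate (h : Laws E S) {t a p x q p' x' q' b u v : List A} (ht : SF E t)
    (hE : E t (a ++ p ++ x ++ x' ++ q' ++ b)) (h1 : S (p ++ x ++ q) (v ++ p'))
    (h2 : S (p' ++ x' ++ q') (q ++ u)) (h3 : q = [] ∨ p' = []) (hx : x ≠ []) (hx' : x' ≠ []) :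
    ¬ S (p ++ x ++ q) (p' ++ x' ++ q') := by
  intro hS
  rcases h3 with rfl | rfl
  · have e1 := h.app a (x' ++ q' ++ b) (h.toE hS)
    have : x' ++ q' = [] := noSq (a := a ++ p') (s := x' ++ q') (b := b) ht (by
      refine h.trans hE ?_
      simpa using e1)
    simp_all
  · have e1 := h.app (a ++ p ++ x) b (h.toE (h.ssymm hS))
    have : p ++ x = [] := noSq (a := a) (s := p ++ x) (b := q ++ b) ht (by
      refine h.trans hE ?_
      simpa using e1)
    simp_all

/-- The union of two overlapping or touching occurrences of linearly decomposable words is linearly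
decomposable. -/
theorem union (h : Laws E S) {a z c : List A} (ht : SF E (a ++ z ++ c)) (ha : a ≠ [])
    (hc : c ≠ []) (hX : Lin' S (a ++ z)) (hY : Lin' S (z ++ c)) : Lin' S (a ++ z ++ c) := by
  obtain ⟨a0, p0, x0, hX, hXe⟩ := hX
  obtain ⟨b0, r0, y0, hY, hYe⟩ := hY
  have hX' : Suf S p0 x0 [] [] := Suf.base hX.ne (by simpa using hX.self h)
  have hY' : Suf S r0 y0 [] [] := Suf.base hY.ne (by simpa using hY.self h)
  obtain ⟨a1, p, x1, x2, q, B, hP, hS, rfl, rfl, hx1⟩ :=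
    splitLeft hX hX' (s := a) (t := z) (by simpa using hXe.symm) ha (by rw [← hXe]; simp)
  obtain ⟨L, hL⟩ := hP.left h
  -- Rewriting of everything in front of `x1`.
  have expose : ∀ {r r' : List A}, E r r' →
      E (a1 ++ x1 ++ r) (L ++ p ++ x1 ++ r') := by
    intro r r' hr
    have e1 := h.app [] (x1 ++ r) hL
    have e2 := h.app (L ++ p ++ x1) [] hr
    simp only [List.nil_append, List.append_nil, List.append_assoc] at e1 e2 ⊢
    exact h.trans e1 e2
  by_cases hq : q = []
  · subst hq
    have hlen : x2.length < (b0 ++ y0).length := by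
      rw [← hYe]
      have := List.length_pos_iff.2 hc
      simp
      omega
    obtain ⟨b1, p', y1, y2, q', B', kP, kS, rfl, hB, hy2⟩ :=
      splitRight hY hY' (s := x2) (t := B ++ c) (by simpa using hYe.symm) hlen
    obtain ⟨L', hL'⟩ := kP.left h
    have e1 := h.app (p ++ x1) y1 hL'
    have hpre : Pre S (a1 ++ (x1 ++ (b1 ++ y1))) (p' ++ y1) y2 q' := by
      refine Pre.step (p' ++ y1 ++ y2 ++ q') (p ++ x1 ++ L') hP ?_ ?_ (Or.inl rfl) hy2
      · exact h.closed (hP.self h) (by simpa using e1)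
      · have := kP.self h
        simpa using this
    have := glue_s18 (kS.cut hy2) hpre
    rw [List.append_assoc, ← hB] at this
    simpa using this
  · cases hS with
    | base => exact absurd rfl hq
    | @step _ _ _ p2 x3 q3 B2 u v s1 s2 s3 s4 s5 =>
    obtain rfl : p2 = [] := by tauto
    obtain ⟨R3, hR3⟩ := s2.right h
    obtain ⟨y, q', B', kP, kS, hyB⟩ := first hY hY'
    rw [List.append_nil, ← hYe] at hyB
    obtain ⟨R', hR'⟩ := kS.right h
    have hx12 : x1 ++ x2 ≠ [] := hP.ne
    have alt : ¬ S (p ++ (x1 ++ x2) ++ q) ([] ++ x3 ++ q3) := by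
      refine h.alternate (a := L) (b := R3 ++ c) ht ?_ s3 s4 s5 hx12 s2.ne
      have e1 := h.app (x2 ++ x3) c hR3
      have := expose e1
      simpa using this
    have hyself : S (y ++ q') (y ++ q') := by simpa using kS.self h
    have cl1 : ¬ S (y ++ q') (p ++ (x1 ++ x2) ++ q) := by
      intro hSy
      have e1 : E (x2 ++ (x3 ++ B2) ++ c) ((p ++ (x1 ++ x2) ++ q) ++ R') := by
        rw [hyB]
        have e1 := h.app y [] hR'
        have e2 := h.app [] R' (h.toE hSy)
        simp only [List.nil_append, List.append_nil, List.append_assoc] at e1 e2 ⊢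
        exact h.trans e1 e2
      have : p ++ x1 = [] := noSq (a := L) (s := p ++ x1) (b := x2 ++ q ++ R') ht (by
        simpa using expose e1)
      simp_all
    have hyx : S (y ++ q') (x3 ++ q3) := by
      rcases h.tri hyself (hP.self h) (s2.self h) with k | k | k
      · exact absurd k cl1
      · exact absurd k alt
      · simpa using k
    by_cases hx2 : x2 = []
    · subst hx2
      have hpre : Pre S (a1 ++ (x1 ++ [])) [] y q' :=
        Pre.step u (p ++ (x1 ++ []) ++ q) hP (by simpa using hP.self h)
          (by simpa using h.strans hyx s4) (Or.inr rfl) kS.ne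
      have := glue_s18 kS hpre
      have e : a1 ++ x1 ++ ([] ++ (x3 ++ B2)) ++ c = a1 ++ (x1 ++ []) ++ y ++ B' := by
        simp only [List.append_assoc] at hyB ⊢
        rw [← hyB]
        simp
      rwa [e]
    · exfalso
      have hyB' : y ++ B' = x2 ++ (x3 ++ B2 ++ c) := by rw [← hyB]; simp
      rcases List.append_eq_append_iff.1 hyB' with ⟨α, hα, hα'⟩ | ⟨α, hα, hα'⟩
      · -- `x2 = y ++ α`
        cases kS with
        | base => simp_all
        | @step _ _ _ p4 y3 q4 B4 u' v' t1 t2 t3 t4 t5 =>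
        obtain ⟨R4, hR4⟩ := t2.right h
        obtain ⟨L4, hL4⟩ : ∃ L4, E y (L4 ++ p4) := by
          rcases t5 with rfl | rfl
          · exact ⟨v', by simpa using h.toE t3⟩
          · exact ⟨y, by simpa using h.refl _⟩
        have alt' : ¬ S ([] ++ y ++ q') (p4 ++ y3 ++ q4) := by
          refine h.alternate (a := L ++ p ++ x1) (b := R4) ht ?_ t3 t4 t5 t1 t2.ne
          have e1 := h.app (y ++ y3) [] hR4
          have e2 : E (x2 ++ (x3 ++ B2) ++ c) (y ++ y3 ++ (q4 ++ R4)) := by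
            rw [hyB]
            simpa using e1
          simpa using expose e2
        have same : S (p ++ (x1 ++ x2) ++ q) (p4 ++ y3 ++ q4) := by
          rcases h.tri (hP.self h) hyself (t2.self h) with k | k | k
          · exact absurd (h.ssymm k) cl1
          · exact absurd k alt'
          · exact k
        have e0 : E (p4 ++ y3 ++ q4) (p ++ x1 ++ L4 ++ p4 ++ α ++ q) := by
          refine h.trans (h.toE (h.ssymm same)) ?_
          subst hα
          simpa using h.app (p ++ x1) (α ++ q) hL4
        have e1 : E (x2 ++ (x3 ++ B2) ++ c) (L4 ++ (p ++ x1 ++ L4 ++ p4 ++ α ++ q) ++ R4) := by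
          rw [hyB]
          have f1 := h.app [] (y3 ++ B4) hL4
          have f2 := h.app (L4 ++ p4 ++ y3) [] hR4
          have f3 := h.app L4 R4 e0
          simp only [List.nil_append, List.append_nil, List.append_assoc] at f1 f2 f3 ⊢
          exact h.trans f1 (h.trans f2 f3)
        have : p ++ x1 ++ L4 = [] :=
          noSq (a := L) (s := p ++ x1 ++ L4) (b := p4 ++ α ++ q ++ R4) ht (by
            simpa using expose e1)
        simp_all
      · -- `y = x2 ++ α`
        refine hx2 (noSq (a := L ++ p ++ x1) (s := x2) (b := α ++ q' ++ R3 ++ c) ht ?_)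
        have f1 := h.app (x2 ++ x3) c hR3
        have f2 := h.app x2 (R3 ++ c) (h.toE (h.ssymm hyx))
        have e1 : E (x2 ++ (x3 ++ B2) ++ c) (x2 ++ (y ++ q') ++ (R3 ++ c)) := by
          simp only [List.append_assoc] at f1 f2 ⊢
          exact h.trans f1 f2
        subst hα
        simpa using expose e1

end Laws

/-! ### Concatenated segments of sequences of words -/

lemma wordSeg_zero (x : ℕ → List A) (a : ℕ) : wordSeg x a 0 = [] := rfl

lemma wordSeg_succ_left (x : ℕ → List A) (a n : ℕ) :
    wordSeg x a (n + 1) = x a ++ wordSeg x (a + 1) n := by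
  simp [wordSeg, List.range'_succ]

lemma wordSeg_succ_right (x : ℕ → List A) (a n : ℕ) :
    wordSeg x a (n + 1) = wordSeg x a n ++ x (a + n) := by
  simp [wordSeg, List.range'_1_concat]

lemma wordSeg_shift {x y : ℕ → List A} {a b n : ℕ} (hxy : ∀ i < n, x (a + i) = y (b + i)) :
    wordSeg x a n = wordSeg y b n := by
  induction n with
  | zero => rfl
  | succ n ih =>
    rw [wordSeg_succ_right, wordSeg_succ_right, ih (fun i hi => hxy i (by omega)),
      hxy n (by omega)]

/-! ### The two descriptions of linear decompositions -/

section
variable {σ ρ : List A → List A → Prop}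

lemma sim_self_left {x y : List A} (h : Sim σ ρ x y) : Sim σ ρ x x := by
  rcases h with h | h
  · exact Or.inl ⟨h.1, h.1⟩
  · exact Or.inr ⟨h.1, h.1⟩

lemma pre_of_decomp {n : ℕ} {x p q : ℕ → List A} (h : IsLinDecomp σ ρ n x p q) (k : ℕ)
    (hk : k + 1 ≤ n) :
    Pre (Sim σ ρ) (wordSeg x 1 k) (p (k + 1)) (x (k + 1)) (q (k + 1)) := by
  obtain ⟨hn, hne, ⟨u, v, hu, hv⟩, hqp, hp1, hqn, h1⟩ := h
  induction k with
  | zero =>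
    simp only [Nat.zero_add, wordSeg_zero, hp1]
    refine Pre.base (hne 1 le_rfl hn) ?_
    rcases Nat.lt_or_ge 1 n with h2 | h2
    · have := sim_self_left (hv 1 le_rfl h2)
      simpa [hp1] using this
    · obtain rfl : n = 1 := by omega
      rw [hqn, List.append_nil]
      exact (h1 rfl).imp (fun h => ⟨h, h⟩) (fun h => ⟨h, h⟩)
  | succ k ih =>
    rw [wordSeg_succ_right, Nat.add_comm 1 k]
    exact Pre.step (u (k + 2)) (v (k + 1)) (ih (by omega)) (hv (k + 1) (by omega) (by omega))
      (by simpa using hu (k + 2) (by omega) hk) (hqp (k + 1) (by omega) (by omega))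
      (hne _ (by omega) hk)

/-- An initial segment of `k + 1` members, in the indexed form of `IsLinDecomp`. -/
lemma decomp_of_pre {a p x q : List A} (h : Pre (Sim σ ρ) a p x q) :
    ∃ (k : ℕ) (X P Q u v : ℕ → List A),
      X (k + 1) = x ∧ P (k + 1) = p ∧ Q (k + 1) = q ∧ a = wordSeg X 1 k ∧
      (∀ i, 1 ≤ i → i ≤ k + 1 → X i ≠ []) ∧
      (∀ i, 1 < i → i ≤ k + 1 → Sim σ ρ (P i ++ X i ++ Q i) (Q (i - 1) ++ u i)) ∧
      (∀ i, 1 ≤ i → i < k + 1 → Sim σ ρ (P i ++ X i ++ Q i) (v i ++ P (i + 1))) ∧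
      (∀ i, 1 ≤ i → i < k + 1 → Q i = [] ∨ P (i + 1) = []) ∧
      P 1 = [] ∧ Sim σ ρ (p ++ x ++ q) (p ++ x ++ q) := by
  induction h with
  | @base x q h1 h2 =>
    exact ⟨0, fun _ => x, fun _ => [], fun _ => q, fun _ => [], fun _ => [], rfl, rfl, rfl, rfl,
      fun _ _ _ => h1, fun i _ _ => by omega, fun i _ _ => by omega, fun i _ _ => by omega, rfl,
      by simpa using h2⟩
  | @step a p x q p' x' q' u v h1 h2 h3 h4 h5 ih =>
    obtain ⟨k, X, P, Q, U, V, rfl, rfl, rfl, rfl, c1, c2, c3, c4, c5, c6⟩ := ih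
    refine ⟨k + 1, Function.update X (k + 2) x', Function.update P (k + 2) p',
      Function.update Q (k + 2) q', Function.update U (k + 2) u, Function.update V (k + 1) v,
      by simp, by simp, by simp, ?_, ?_, ?_, ?_, ?_, by simpa using c5, sim_self_left h3⟩
    · have e : X (k + 1) = X (1 + k) := by rw [Nat.add_comm]
      rw [e, ← wordSeg_succ_right]
      refine wordSeg_shift fun i hi => ?_
      rw [Function.update_of_ne (by omega)]
    · intro i hi hi'
      rcases eq_or_ne i (k + 2) with rfl | hne
      · simpa using h5
      · rw [Function.update_of_ne hne]
        exact c1 i hi (by omega)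
    · intro i hi hi'
      rcases eq_or_ne i (k + 2) with rfl | hne
      · simpa using h3
      · rw [Function.update_of_ne hne, Function.update_of_ne hne, Function.update_of_ne hne,
          Function.update_of_ne hne, Function.update_of_ne (by omega)]
        exact c2 i hi (by omega)
    · intro i hi hi'
      rw [Function.update_of_ne (by omega), Function.update_of_ne (by omega),
        Function.update_of_ne (by omega)]
      rcases eq_or_ne i (k + 1) with rfl | hne
      · simpa using h2
      · rw [Function.update_of_ne hne, Function.update_of_ne (by omega)]
        exact c3 i hi (by omega)
    · intro i hi hi'
      rw [Function.update_of_ne (by omega)]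
      rcases eq_or_ne i (k + 1) with rfl | hne
      · simpa using h4
      · rw [Function.update_of_ne (by omega)]
        exact c4 i hi (by omega)

lemma mem_linAll {e : List A} : e ∈ LinAll σ ρ ↔ Lin' (Sim σ ρ) e := by
  constructor
  · rintro ⟨n, m, hm, -, x, p, q, hd, rfl⟩
    obtain ⟨k, rfl⟩ : ∃ k, m = k + 1 := ⟨m - 1, by omega⟩
    have := pre_of_decomp hd k le_rfl
    rw [hd.2.2.2.2.2.1] at this
    exact ⟨_, _, _, this, by rw [wordSeg_succ_right, Nat.add_comm]⟩
  · rintro ⟨a, p, x, hp, rfl⟩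
    obtain ⟨k, X, P, Q, U, V, rfl, rfl, hQ, rfl, c1, c2, c3, c4, c5, c6⟩ := decomp_of_pre hp
    refine ⟨k + 1, k + 1, by omega, le_rfl, X, P, Q,
      ⟨by omega, c1, ⟨U, V, c2, c3⟩, c4, c5, hQ, ?_⟩, ?_⟩
    · intro hk
      obtain rfl : k = 0 := by omega
      simp only [Nat.zero_add, c5, List.nil_append, List.append_nil] at c6
      exact c6.imp (fun h => h.1) (fun h => h.1)
    · rw [wordSeg_succ_right, Nat.add_comm]

/-! ### The closures of the sets of defining words are congruence classes -/

lemma oneStep_symm {π : List A → List A → Prop} {x y : List A} (h : OneStep π x y) :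
    OneStep π y x := by
  obtain ⟨r, s, u, v, rfl, rfl, h⟩ := h
  exact ⟨r, s, v, u, rfl, rfl, h.symm⟩

lemma eqRel_symm {π : List A → List A → Prop} {x y : List A} (h : EqRel π x y) :
    EqRel π y x := by
  induction h with
  | refl => exact Relation.ReflTransGen.refl
  | tail _ hs ih => exact Relation.ReflTransGen.head (oneStep_symm hs) ih

lemma eqRel_app {π : List A → List A → Prop} {x y : List A} (a b : List A) (h : EqRel π x y) :
    EqRel π (a ++ x ++ b) (a ++ y ++ b) := by
  refine Relation.ReflTransGen.lift (fun z => a ++ z ++ b) ?_ _ _ h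
  rintro _ _ ⟨r, s, u, v, rfl, rfl, h⟩
  exact ⟨a ++ r, s ++ b, u, v, by simp, by simp, h⟩

lemma eqRel_mono {π π' : List A → List A → Prop} (hπ : ∀ x y, π x y → π' x y) {x y : List A}
    (h : EqRel π x y) : EqRel π' x y := by
  refine Relation.ReflTransGen.mono ?_ _ _ h
  rintro _ _ ⟨r, s, u, v, rfl, rfl, h⟩
  exact ⟨r, s, u, v, rfl, rfl, h.imp (hπ _ _) (hπ _ _)⟩

lemma eqRel_single {π : List A → List A → Prop} {x y : List A} (h : π x y ∨ π y x) :
    EqRel π x y :=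
  Relation.ReflTransGen.single ⟨[], [], x, y, by simp, by simp, h⟩

lemma exists_of_mem_dwords {n : ℕ} {u : Fin n → List A} {x : List A}
    (h : x ∈ DWords (FamilyRel u)) : ∃ i, x = u i := by
  obtain ⟨y, ⟨i, j, -, h1, -⟩ | ⟨i, j, -, -, h1⟩⟩ := h
  · exact ⟨i, h1⟩
  · exact ⟨j, h1⟩

lemma family_eqRel {n : ℕ} (u : Fin n → List A) (i j : Fin n) :
    EqRel (FamilyRel u) (u i) (u j) := by
  rcases lt_trichotomy i j with h | rfl | h
  · exact eqRel_single (Or.inl ⟨i, j, h, rfl, rfl⟩)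
  · exact Relation.ReflTransGen.refl
  · exact eqRel_single (Or.inr ⟨j, i, h, rfl, rfl⟩)

/-- The closure of the defining words of a single family lies in one class of the congruence
generated by both systems. -/
lemma closure_eqRel {n : ℕ} {u : Fin n → List A} {ρ π : List A → List A → Prop}
    (h1 : ∀ x y, FamilyRel u x y → π x y) (h2 : ∀ x y, ρ x y → π x y) {x y : List A}
    (hx : x ∈ ClosureD (FamilyRel u) ρ) (hy : y ∈ ClosureD (FamilyRel u) ρ) : EqRel π x y := by
  obtain ⟨a, ha, hax⟩ := hx
  obtain ⟨b, hb, hby⟩ := hy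
  obtain ⟨i, rfl⟩ := exists_of_mem_dwords ha
  obtain ⟨j, rfl⟩ := exists_of_mem_dwords hb
  exact (eqRel_symm (eqRel_mono h2 hax)).trans
    ((eqRel_mono h1 (family_eqRel u i j)).trans (eqRel_mono h2 hby))

lemma closure_closed {σ ρ π : List A → List A → Prop} (hπ : ∀ x y, π x y → σ x y ∨ ρ x y)
    (hc : ∀ x ∈ ClosureD σ ρ, ∀ y, EqRel σ x y → y ∈ ClosureD σ ρ) {x y : List A}
    (hx : x ∈ ClosureD σ ρ) (h : EqRel π x y) : y ∈ ClosureD σ ρ := by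
  induction h with
  | refl => exact hx
  | @tail y z _ hyz ih =>
    obtain ⟨r, s, u, v, rfl, rfl, h⟩ := hyz
    have : OneStep σ (r ++ u ++ s) (r ++ v ++ s) ∨ OneStep ρ (r ++ u ++ s) (r ++ v ++ s) := by
      rcases h with h | h
      · exact (hπ _ _ h).imp (fun h => ⟨r, s, u, v, rfl, rfl, Or.inl h⟩)
          (fun h => ⟨r, s, u, v, rfl, rfl, Or.inl h⟩)
      · exact (hπ _ _ h).imp (fun h => ⟨r, s, u, v, rfl, rfl, Or.inr h⟩)
          (fun h => ⟨r, s, u, v, rfl, rfl, Or.inr h⟩)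
    rcases this with h | h
    · exact hc _ ih _ (Relation.ReflTransGen.single h)
    · obtain ⟨w, hw, hwx⟩ := ih
      exact ⟨w, hw, hwx.tail h⟩

lemma laws {nu nv : ℕ} (u : Fin nu → List A) (v : Fin nv → List A)
    (hset : SettingHyps (FamilyRel u) (FamilyRel v)) :
    Laws (EqRel (PiRel (FamilyRel u) (FamilyRel v))) (Sim (FamilyRel u) (FamilyRel v)) := by
  obtain ⟨-, -, -, -, -, hc1, hc2⟩ := hset
  refine ⟨fun _ => Relation.ReflTransGen.refl, eqRel_symm, Relation.ReflTransGen.trans,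
    fun a b _ _ h => eqRel_app a b h, fun h => h.imp And.symm And.symm, ?_, ?_, ?_⟩
  · rintro x y (⟨hx, hy⟩ | ⟨hx, hy⟩)
    · exact closure_eqRel (fun _ _ => Or.inl) (fun _ _ => Or.inr) hx hy
    · exact closure_eqRel (fun _ _ => Or.inr) (fun _ _ => Or.inl) hx hy
  · rintro x y z (⟨hx, hy⟩ | ⟨hx, hy⟩) h
    · exact Or.inl ⟨hx, closure_closed (fun _ _ h => h) hc1 hy h⟩
    · exact Or.inr ⟨hx, closure_closed (fun _ _ h => h.symm) hc2 hy h⟩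
  · intro x y z h1 h2 h3
    unfold Sim at *
    tauto

lemma dword_mem_dTau {σ ρ : List A → List A → Prop} {d : List A}
    (hd : d ∈ DWords (PiRel σ ρ)) : d ∈ DTau σ ρ := by
  obtain ⟨y, (h | h) | (h | h)⟩ := hd
  · exact Or.inl ⟨d, ⟨y, Or.inl h⟩, Relation.ReflTransGen.refl⟩
  · exact Or.inr ⟨d, ⟨y, Or.inl h⟩, Relation.ReflTransGen.refl⟩
  · exact Or.inl ⟨d, ⟨y, Or.inr h⟩, Relation.ReflTransGen.refl⟩
  · exact Or.inr ⟨d, ⟨y, Or.inr h⟩, Relation.ReflTransGen.refl⟩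

lemma familyRel_ne {n : ℕ} {u : Fin n → List A} (hu : Function.Injective u) {x y : List A}
    (h : FamilyRel u x y) : x ≠ y := by
  obtain ⟨i, j, hij, rfl, rfl⟩ := h
  exact fun h => hij.ne (hu h)

/-- If the empty word were a defining word, every word would be congruent to one beginning with a
nonempty square. -/
lemma dword_ne_nil {π : List A → List A → Prop} (hne : ∀ x y, π x y → x ≠ y) {w d : List A}
    (hsf : SFRel π w) (hd : d ∈ DWords π) : d ≠ [] := by
  rintro rfl
  obtain ⟨y, hy⟩ := hd
  have hy0 : y ≠ [] := by
    rintro rfl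
    rcases hy with h | h <;> exact hne _ _ h rfl
  have e : EqRel π [] y := eqRel_single hy
  have e1 := eqRel_app [] w e
  have e2 := eqRel_app y w e
  simp only [List.nil_append, List.append_nil] at e1 e2
  exact hy0 (hsf _ (e1.trans e2) [] y w (by simp))

end

/-! ### Greedy factorization -/

/-- If overlapping occurrences of words of `L` in `w` merge within `L`, and no such occurrence
straddles the beginning of the suffix `T` of `w`, then `T` factors as required. -/
lemma greedy {L D : Set (List A)} {w : List A} (hL : [] ∉ L) (hDL : D ⊆ L)
    (hU : ∀ P a z c Q, w = P ++ (a ++ z ++ c) ++ Q → a ≠ [] → c ≠ [] → a ++ z ∈ L → z ++ c ∈ L →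
      a ++ z ++ c ∈ L) (N : ℕ) :
    ∀ P T : List A, T.length ≤ N → w = P ++ T →
      (∀ r d s, w = r ++ d ++ s → d ∈ L → r.length < P.length → (r ++ d).length ≤ P.length) →
      ∃ (n : ℕ) (r x : ℕ → List A),
        T = wordSeg (fun j => r j ++ x j) 1 n ++ r (n + 1) ∧
        (∀ i, 1 ≤ i → i ≤ n + 1 → ∀ d ∈ D, ¬ d <:+: r i) ∧
        (∀ i, 1 ≤ i → i ≤ n →
          MaximalOcc L w (P ++ (wordSeg (fun j => r j ++ x j) 1 (i - 1) ++ r i)) (x i)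
            (wordSeg (fun j => r j ++ x j) (i + 1) (n - i) ++ r (n + 1))) := by
  classical
  induction N with
  | zero =>
    intro P T hT hw _
    obtain rfl : T = [] := List.eq_nil_of_length_eq_zero (by omega)
    refine ⟨0, fun _ => [], fun _ => [], rfl, ?_, fun i _ _ => by omega⟩
    intro i _ _ d hd hdi
    exact hL (by simpa using (List.infix_nil.1 hdi) ▸ hDL hd)
  | succ N ih =>
    intro P T hT hw hcut
    by_cases hex : ∃ k r x s, T = r ++ x ++ s ∧ x ∈ L ∧ r.length = k
    swap
    · refine ⟨0, fun _ => T, fun _ => [], by simp [wordSeg_zero], ?_, fun i _ _ => by omega⟩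
      rintro i _ _ d hd ⟨r, s, hrs⟩
      exact hex ⟨_, r, d, s, hrs.symm, hDL hd, rfl⟩
    -- The leftmost occurrence, and among those starting there the longest.
    have hex2 : ∃ l r x s, T = r ++ x ++ s ∧ x ∈ L ∧ r.length = Nat.find hex ∧ s.length = l := by
      obtain ⟨r, x, s, h1, h2, h3⟩ := Nat.find_spec hex
      exact ⟨_, r, x, s, h1, h2, h3, rfl⟩
    obtain ⟨r, x, s, hT', hx, hr, hs⟩ := Nat.find_spec hex2
    have left : ∀ r' x' s', T = r' ++ x' ++ s' → x' ∈ L → r.length ≤ r'.length := by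
      intro r' x' s' h1 h2
      rw [hr]
      exact Nat.find_min' hex ⟨r', x', s', h1, h2, rfl⟩
    have long : ∀ r' x' s', T = r' ++ x' ++ s' → x' ∈ L → r'.length = r.length →
        s.length ≤ s'.length := by
      intro r' x' s' h1 h2 h3
      rw [hs]
      exact Nat.find_min' hex2 ⟨r', x', s', h1, h2, h3.trans hr, rfl⟩
    have hx0 : 0 < x.length := List.length_pos_iff.2 (fun h => hL (h ▸ hx))
    -- An occurrence in `w` starting at or after the end of `P` is an occurrence in `T`.
    have inT : ∀ r' d s', w = r' ++ d ++ s' → P.length ≤ r'.length →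
        ∃ r'', r' = P ++ r'' ∧ T = r'' ++ d ++ s' := by
      intro r' d s' h1 h2
      have h3 : P ++ T = r' ++ (d ++ s') := by rw [← hw, h1]; simp
      rcases List.append_eq_append_iff.1 h3 with ⟨c, hc, hc'⟩ | ⟨c, hc, hc'⟩
      · exact ⟨c, hc, by simpa using hc'⟩
      · obtain rfl : c = [] := by
          have := congrArg List.length hc
          simp at this
          exact List.eq_nil_of_length_eq_zero (by omega)
        exact ⟨[], by simpa using hc.symm, by simpa using hc'.symm⟩
    have hmax : MaximalOcc L w (P ++ r) x s := by
      refine ⟨by rw [hw, hT']; simp, hx, ?_⟩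
      rintro r' d s' h1 h2 ⟨h3, h4⟩
      have hlen : (r' ++ d ++ s').length = (P ++ (r ++ x ++ s)).length := by
        rw [← h1, ← hT', ← hw]
      simp only [List.length_append] at hlen h3
      have hP : P.length ≤ r'.length := by
        by_contra hlt
        have := hcut r' d s' h1 h2 (by omega)
        simp only [List.length_append] at this
        omega
      obtain ⟨r'', rfl, h5⟩ := inT r' d s' h1 hP
      have l1 := left _ _ _ h5 h2
      have l2 : r''.length = r.length := by simp at h3; omega
      have l3 := long _ _ _ h5 h2 l2
      rw [hT', List.append_assoc, List.append_assoc] at h5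
      obtain ⟨e1, e2⟩ := List.append_inj h5 l2.symm
      obtain ⟨e3, e4⟩ := List.append_inj' e2 (by omega)
      exact ⟨by rw [e1], e3.symm, e4.symm⟩
    have hcutNext : ∀ r' d s', w = r' ++ d ++ s' → d ∈ L → r'.length < (P ++ r ++ x).length →
        (r' ++ d).length ≤ (P ++ r ++ x).length := by
      intro r' d s' h1 h2 h3
      by_contra h4
      by_cases hP : r'.length < P.length
      · have := hcut r' d s' h1 h2 hP
        simp only [List.length_append] at this h4
        omega
      obtain ⟨r'', rfl, h5⟩ := inT r' d s' h1 (by omega)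
      have l1 := left _ _ _ h5 h2
      have hlen : (r'' ++ d ++ s').length = (r ++ x ++ s).length := by rw [← h5, hT']
      simp only [List.length_append] at hlen h3 h4
      have l2 : r.length < r''.length := by
        by_contra hl
        have := long _ _ _ h5 h2 (by omega)
        omega
      -- The occurrence starts strictly inside `x` and ends after it: merge it with `x`.
      have h6 : r ++ (x ++ s) = r'' ++ (d ++ s') := by
        rw [← List.append_assoc, ← hT', h5, List.append_assoc]
      obtain ⟨a, rfl, ha⟩ | ⟨a, ha, -⟩ := List.append_eq_append_iff.1 h6
      swap
      · have := congrArg List.length ha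
        simp at this
        omega
      simp only [List.length_append] at h3 h4 hlen l2
      obtain ⟨z, ha2, hz⟩ | ⟨z, rfl, hz⟩ := List.append_eq_append_iff.1 ha
      · have := congrArg List.length ha2
        simp at this
        omega
      obtain ⟨c, rfl, hc⟩ | ⟨c, hc2, -⟩ := List.append_eq_append_iff.1 hz.symm
      swap
      · have := congrArg List.length hc2
        simp at this h3 h4
        omega
      simp only [List.length_append] at h3 h4 hlen
      have hmerge := hU (P ++ r) a z c s' (by rw [h1]; simp)
        (List.length_pos_iff.1 (by omega)) (List.length_pos_iff.1 (by omega)) hx h2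
      have := long r _ s' (by rw [h5]; simp) hmerge rfl
      omega
    obtain ⟨n, r1, x1, g1, g2, g3⟩ := ih (P ++ r ++ x) s
      (by rw [hT'] at hT; simp at hT; omega) (by rw [hw, hT']; simp) hcutNext
    -- Prepend the pair `(r, x)`, shifting the index by one.
    let R : ℕ → List A := fun j => if j = 1 then r else r1 (j - 1)
    let X : ℕ → List A := fun j => if j = 1 then x else x1 (j - 1)
    have hR1 : R 1 = r := rfl
    have hX1 : X 1 = x := rfl
    have hRs : ∀ j, R (j + 2) = r1 (j + 1) := fun j => by simp [R]
    have hXs : ∀ j, X (j + 2) = x1 (j + 1) := fun j => by simp [X]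
    have hseg : ∀ a m, wordSeg (fun j => R j ++ X j) (a + 2) m =
        wordSeg (fun j => r1 j ++ x1 j) (a + 1) m := by
      intro a m
      refine wordSeg_shift fun i _ => ?_
      have e : a + 2 + i = a + i + 2 := by omega
      have e' : a + 1 + i = a + i + 1 := by omega
      simp only [e, e', hRs, hXs]
    refine ⟨n + 1, R, X, ?_, ?_, ?_⟩
    · have e2 := hseg 0 n
      simp only [Nat.zero_add] at e2
      rw [wordSeg_succ_left, e2, hRs, hR1, hX1, hT']
      conv_lhs => rw [g1]
      simp
    · intro i hi hi'
      obtain rfl | ⟨k, rfl⟩ : i = 1 ∨ ∃ k, i = k + 2 := by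
        rcases Nat.lt_or_ge 1 i with h | h
        · exact Or.inr ⟨i - 2, by omega⟩
        · exact Or.inl (by omega)
      · rintro d hd ⟨r', s', hrs⟩
        rw [hR1] at hrs
        have l1 := left r' d (s' ++ x ++ s) (by rw [hT', ← hrs]; simp) (hDL hd)
        have l2 := congrArg List.length hrs
        have l3 : 0 < d.length := List.length_pos_iff.2 (fun h => hL (h ▸ hDL hd))
        simp at l2
        omega
      · rw [hRs]
        exact g2 (k + 1) (by omega) (by omega)
    · intro i hi hi'
      obtain rfl | ⟨k, rfl⟩ : i = 1 ∨ ∃ k, i = k + 2 := by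
        rcases Nat.lt_or_ge 1 i with h | h
        · exact Or.inr ⟨i - 2, by omega⟩
        · exact Or.inl (by omega)
      · have e2 := hseg 0 n
        simp only [Nat.zero_add] at e2
        simp only [Nat.sub_self, wordSeg_zero, List.nil_append, hR1, hX1, Nat.add_sub_cancel,
          hRs, Nat.reduceAdd]
        rw [e2, ← g1]
        exact hmax
      · have := g3 (k + 1) (by omega) (by omega)
        have e1 : k + 2 - 1 = k + 1 := by omega
        have e2 := hseg 0 k
        simp only [Nat.zero_add] at e2
        have e3 : n + 1 - (k + 2) = n - (k + 1) := by omega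
        have e4 : k + 2 + 1 = k + 1 + 2 := by omega
        rw [e1, wordSeg_succ_left, e2, e3, e4, hseg, hRs, hRs, hXs, hR1, hX1]
        simpa using this

/-- every word square-free relative to `π` factors as
`r_1·x_1·r_2·x_2⋯r_n·x_n·r_{n+1}` where the `r_i` contain no defining word as a
factor and each `x_i` is a maximal occurrence of a linearly decomposable word. -/
theorem sqfree_decomposition {A : Type*} {nu nv : ℕ}
    (u : Fin nu → List A) (v : Fin nv → List A)
    (hu : Function.Injective u) (hv : Function.Injective v)
    (σ ρ : List A → List A → Prop) (hσ : σ = FamilyRel u) (hρ : ρ = FamilyRel v)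
    (hset : SettingHyps σ ρ)
    (w : List A) (hsf : SFRel (PiRel σ ρ) w) :
    ∃ (n : ℕ) (r x : ℕ → List A),
      w = wordSeg (fun j => r j ++ x j) 1 n ++ r (n+1) ∧
      (∀ i, 1 ≤ i → i ≤ n + 1 → ∀ d ∈ DWords (PiRel σ ρ), ¬ d <:+: r i) ∧
      (∀ i, 1 ≤ i → i ≤ n →
        MaximalOcc (LinAll σ ρ) w
          (wordSeg (fun j => r j ++ x j) 1 (i-1) ++ r i)
          (x i)
          (wordSeg (fun j => r j ++ x j) (i+1) (n-i) ++ r (n+1))) := by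
  subst hσ hρ
  have hl := laws u v hset
  have hU : ∀ P a z c Q, w = P ++ (a ++ z ++ c) ++ Q → a ≠ [] → c ≠ [] →
      a ++ z ∈ LinAll (FamilyRel u) (FamilyRel v) → z ++ c ∈ LinAll (FamilyRel u) (FamilyRel v) →
      a ++ z ++ c ∈ LinAll (FamilyRel u) (FamilyRel v) := by
    intro P a z c Q hw ha hc h1 h2
    rw [mem_linAll] at *
    exact hl.union (hl.SF_factor (a := P) (b := Q) (hw ▸ hsf)) ha hc h1 h2
  have hL : [] ∉ LinAll (FamilyRel u) (FamilyRel v) := by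
    rw [mem_linAll]
    rintro ⟨a, p, x, hp, he⟩
    have := hp.ne
    simp_all
  have hD : DWords (PiRel (FamilyRel u) (FamilyRel v)) ⊆
      LinAll (FamilyRel u) (FamilyRel v) := by
    intro d hd
    have hne : d ≠ [] := by
      refine dword_ne_nil ?_ hsf hd
      rintro x y (h | h)
      · exact familyRel_ne hu h
      · exact familyRel_ne hv h
    rw [mem_linAll]
    refine ⟨[], [], d, Pre.base hne ?_, rfl⟩
    rw [List.append_nil]
    exact (dword_mem_dTau hd).imp (fun h => ⟨h, h⟩) (fun h => ⟨h, h⟩)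
  simpa only [List.nil_append] using
    greedy hL hD hU w.length [] w le_rfl rfl (fun r d s _ _ h => by simp at h)
end SqFreePaper
end
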